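/- For countable linear orders A and B, the Scott rank of their concatenation satisfies SR(A + B) ≤ max{SR(A), SR(B)} · 2 + 3. -/

import Mathlib

/-- The standard back-and-forth relation between tuples in linear orders, defined by
transfinite recursion: `bfT 0` holds iff the tuples satisfy the same atomic formulas;
`bfT ξ L M a b` iff the tuples satisfy the same atomic formulas and for every `γ < ξ`
and every tuple `d` in `M` there is a tuple `c` in `L` with `bfT γ M L (b ++ d) (a ++ c)`. -/
def bfT (ξ : Ordinal) (L : Type) [LinearOrder L] (M : Type) [LinearOrder M]
    {k : ℕ} (a : Fin k → L) (b : Fin k → M) : Prop :=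
  (∀ i j, a i ≤ a j ↔ b i ≤ b j) ∧
  ∀ γ < ξ, ∀ (l : ℕ) (d : Fin l → M), ∃ c : Fin l → L,
    bfT γ M L (Fin.append b d) (Fin.append a c)
termination_by ξ

/-- `rk L a` is the least ordinal `α` such that every tuple `b` with
`(L, a) ≤_α (L, b)` is automorphic to `a`. -/
noncomputable def rk (L : Type) [LinearOrder L] {k : ℕ} (a : Fin k → L) : Ordinal :=
  sInf {α | ∀ b : Fin k → L, bfT α L L a b → ∃ f : L ≃o L, ∀ i, f (a i) = b i}

/-- The Scott rank of a linear order: the least ordinal strictly greater than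
`rk L a` for every finite tuple `a` in `L`. -/
noncomputable def scottRank (L : Type) [LinearOrder L] : Ordinal :=
  sInf {α | ∀ (k : ℕ) (a : Fin k → L), rk L a < α}

/-!
Back-and-forth relations replace infinitary formulas: if `scottRank L ≤ α`, then `≤_{α+1}` already
determines the isomorphism type and the automorphism orbits of `L`.

Let `α` be the larger of the two Scott ranks. If some `x ∈ A` and `y ∈ B` have isomorphic initial
segments in `A + B`, then all points below `y`, and all points above it, form orders of Scott rank
at most `α`, so that after naming `y` the relation `≤_{α+1}` decides automorphism. Otherwise
`≤_{α+2}` never relates a point of `A` to a point of `B`. Then `≤_{α+2+δ}` on `A + B` restricts to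
`≤_δ` on each summand, the ranks `δ` of tuples there are below `α`, and `α + 2 + δ ≤ α · 2 + 1`.
-/

open Set Matrix

universe u

variable {L M N : Type} [LinearOrder L] [LinearOrder M] [LinearOrder N] {k l : ℕ}

/-- `(L, a) ≅ (M, b)`: some order isomorphism carries the tuple `a` to the tuple `b`. For `L = M`
this says that `a` and `b` lie in the same automorphism orbit. -/
def TupleIso (a : Fin k → L) (b : Fin k → M) : Prop :=
  ∃ f : L ≃o M, ∀ i, f (a i) = b i

namespace TupleIso

theorem refl (a : Fin k → L) : TupleIso a a := ⟨OrderIso.refl L, fun _ => rfl⟩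

theorem symm {a : Fin k → L} {b : Fin k → M} : TupleIso a b → TupleIso b a
  | ⟨f, hf⟩ => ⟨f.symm, fun i => by rw [← hf, f.symm_apply_apply]⟩

theorem trans {a : Fin k → L} {b : Fin k → M} {c : Fin k → N} :
    TupleIso a b → TupleIso b c → TupleIso a c
  | ⟨f, hf⟩, ⟨g, hg⟩ => ⟨f.trans g, fun i => by rw [OrderIso.trans_apply, hf, hg]⟩

theorem of_vecCons {x : L} {y : M} {a : Fin k → L} {b : Fin k → M} :
    TupleIso (vecCons x a) (vecCons y b) → TupleIso a b
  | ⟨f, hf⟩ => ⟨f, fun i => hf i.succ⟩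

end TupleIso

theorem bfT_iff {ξ : Ordinal.{u}} {a : Fin k → L} {b : Fin k → M} :
    bfT ξ L M a b ↔ (∀ i j, a i ≤ a j ↔ b i ≤ b j) ∧
      ∀ γ < ξ, ∀ (l : ℕ) (d : Fin l → M), ∃ c : Fin l → L,
        bfT γ M L (Fin.append b d) (Fin.append a c) := by
  rw [bfT]

namespace bfT

variable {ξ γ β : Ordinal.{u}} {a : Fin k → L} {b : Fin k → M} {c : Fin k → N}

theorem le_iff_le (h : bfT ξ L M a b) (i j : Fin k) : a i ≤ a j ↔ b i ≤ b j :=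
  (bfT_iff.1 h).1 i j

theorem exists_append (h : bfT ξ L M a b) (hγ : γ < ξ) (d : Fin l → M) :
    ∃ c : Fin l → L, bfT γ M L (Fin.append b d) (Fin.append a c) :=
  (bfT_iff.1 h).2 γ hγ l d

theorem mono (h : bfT ξ L M a b) (hγ : γ ≤ ξ) : bfT γ L M a b :=
  bfT_iff.2 ⟨h.le_iff_le, fun _ hδ _ d => h.exists_append (hδ.trans_le hγ) d⟩

theorem of_pairs {L M : Type} [LinearOrder L] [LinearOrder M] {k l : ℕ} {ξ : Ordinal.{u}}
    {a : Fin k → L} {b : Fin k → M} {a' : Fin l → L} {b' : Fin l → M} (h : bfT ξ L M a b)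
    (hab : ∀ j, ∃ i, a' j = a i ∧ b' j = b i) : bfT ξ L M a' b' := by
  choose σ ha hb using hab
  refine bfT_iff.2 ⟨fun i j => ?_, fun γ hγ n d => ?_⟩
  · simpa only [ha, hb] using h.le_iff_le (σ i) (σ j)
  · obtain ⟨c, hc⟩ := h.exists_append hγ d
    exact ⟨c, hc.of_pairs <| Fin.addCases
      (fun j => ⟨Fin.castAdd n (σ j), by simp [ha, hb]⟩)
      (fun j => ⟨Fin.natAdd k j, by simp⟩)⟩
termination_by ξ

theorem exists_vecCons (h : bfT ξ L M a b) (hγ : γ < ξ) (y : M) :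
    ∃ x : L, bfT γ M L (vecCons y b) (vecCons x a) := by
  obtain ⟨c, hc⟩ := h.exists_append hγ ![y]
  exact ⟨c 0, hc.of_pairs <| Fin.cases
    ⟨Fin.natAdd k 0, by simp⟩ (fun j => ⟨Fin.castAdd 1 j, by simp⟩)⟩

theorem of_vecCons {x : L} {y : M} (h : bfT ξ L M (vecCons x a) (vecCons y b)) :
    bfT ξ L M a b :=
  h.of_pairs fun j => ⟨j.succ, rfl, rfl⟩

theorem swap (h : bfT ξ L M a b) (hγ : γ < ξ) : bfT γ M L b a := by
  obtain ⟨_, hc⟩ := h.exists_append hγ ![]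
  exact hc.of_pairs fun j => ⟨Fin.castAdd 0 j, (Fin.append_left ..).symm, (Fin.append_left ..).symm⟩

theorem trans {L M N : Type} [LinearOrder L] [LinearOrder M] [LinearOrder N] {k : ℕ}
    {ξ : Ordinal.{u}} {a : Fin k → L} {b : Fin k → M} {c : Fin k → N}
    (hab : bfT ξ L M a b) (hbc : bfT ξ M N b c) : bfT ξ L N a c := by
  refine bfT_iff.2 ⟨fun i j => (hab.le_iff_le i j).trans (hbc.le_iff_le i j), fun γ hγ l d => ?_⟩
  obtain ⟨e, he⟩ := hbc.exists_append hγ d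
  obtain ⟨f, hf⟩ := hab.exists_append hγ e
  exact ⟨f, he.trans hf⟩
termination_by ξ

theorem of_tupleIso {L M : Type} [LinearOrder L] [LinearOrder M] {k : ℕ} {ξ : Ordinal.{u}}
    {a : Fin k → L} {b : Fin k → M} (h : TupleIso a b) : bfT ξ L M a b := by
  obtain ⟨f, hf⟩ := h
  refine bfT_iff.2 ⟨fun i j => by rw [← hf, ← hf, f.le_iff_le], fun γ _ l d => ?_⟩
  refine ⟨f.symm ∘ d, of_tupleIso ⟨f.symm, Fin.addCases (fun j => ?_) (fun j => ?_)⟩⟩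
  · simp [← hf]
  · simp
termination_by ξ

/-- The identity outside `P` can be added to any back-and-forth on `P`, since the points outside a
convex set do not distinguish between its elements. -/
theorem of_ordConnected {P : Set L} (hP : P.OrdConnected) {k l : ℕ} {ξ : Ordinal.{u}}
    {t s : Fin l → P} {a b : Fin k → L} (h : bfT ξ P P t s)
    (hab : ∀ i, (∃ j, a i = t j ∧ b i = s j) ∨ (a i = b i ∧ a i ∉ P)) : bfT ξ L L a b := by
  have le_left : ∀ z ∉ P, ∀ p q : P, z ≤ p → z ≤ q := fun z hz p q hzp =>
    le_of_not_ge fun hqz => hz (hP.out q.2 p.2 ⟨hqz, hzp⟩)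
  have le_right : ∀ z ∉ P, ∀ p q : P, p ≤ z → q ≤ z := fun z hz p q hpz =>
    le_of_not_ge fun hzq => hz (hP.out p.2 q.2 ⟨hpz, hzq⟩)
  refine bfT_iff.2 ⟨fun i j => ?_, fun γ hγ n d => ?_⟩
  · rcases hab i with ⟨i', hai, hbi⟩ | ⟨hi, hiP⟩ <;> rcases hab j with ⟨j', haj, hbj⟩ | ⟨hj, hjP⟩
    · rw [hai, hbi, haj, hbj]
      exact h.le_iff_le i' j'
    · rw [hai, hbi, ← hj]
      exact ⟨le_right _ hjP _ _, le_right _ hjP _ _⟩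
    · rw [← hi, haj, hbj]
      exact ⟨le_left _ hiP _ _, le_left _ hiP _ _⟩
    · rw [hi, hj]
  · obtain ⟨m, e, -, he⟩ := {i | d i ∈ P}.toFinite.fin_param
    have heP : ∀ j, d (e j) ∈ P := fun j => he.subset (mem_range_self j)
    obtain ⟨c, hc⟩ := h.exists_append hγ fun j => (⟨d (e j), heP j⟩ : P)
    have response : ∀ i, ∃ x : L,
        (∃ j, d i = d (e j) ∧ x = c j) ∨ (d i = x ∧ d i ∉ P) := fun i => by
      by_cases hi : d i ∈ P
      · obtain ⟨j, rfl⟩ := he.superset hi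
        exact ⟨c j, .inl ⟨j, rfl, rfl⟩⟩
      · exact ⟨d i, .inr ⟨rfl, hi⟩⟩
    choose x hx using response
    refine ⟨x, of_ordConnected hP hc (Fin.addCases (fun i => ?_) (fun i => ?_))⟩
    · rcases hab i with ⟨j, haj, hbj⟩ | ⟨hi, hiP⟩
      · exact .inl ⟨Fin.castAdd m j, by simp [haj, hbj]⟩
      · exact .inr (by simpa [← hi] using hiP)
    · rcases hx i with ⟨j, hdj, hxj⟩ | hi
      · exact .inl ⟨Fin.natAdd l j, by simp [hdj, hxj]⟩
      · exact .inr (by simpa using hi)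
termination_by ξ

end bfT

theorem exists_orderIso_of_rel (R : L → M → Prop) (hR : ∀ x, ∃ y, R x y) (hR' : ∀ y, ∃ x, R x y)
    (le_iff_le : ∀ {x y x' y'}, R x y → R x' y' → (x ≤ x' ↔ y ≤ y')) :
    ∃ f : L ≃o M, ∀ x y, R x y → f x = y := by
  choose f hf using hR
  have f_eq : ∀ {x y}, R x y → f x = y := fun {x y} h =>
    le_antisymm ((le_iff_le (hf x) h).1 le_rfl) ((le_iff_le h (hf x)).1 le_rfl)
  have f_mono : StrictMono f := fun x x' h =>
    lt_of_not_ge fun h' => h.not_ge ((le_iff_le (hf x') (hf x)).2 h')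
  exact ⟨f_mono.orderIsoOfSurjective f fun y => (hR' y).imp fun _ => f_eq, fun _ _ => f_eq⟩

theorem exists_orderIso_of_backAndForth [Countable L] [Countable M] (J : Set (Set (L × M)))
    (le_iff_le : ∀ S ∈ J, ∀ u ∈ S, ∀ v ∈ S, u.1 ≤ v.1 ↔ u.2 ≤ v.2)
    (forth : ∀ S ∈ J, ∀ x, ∃ y, insert (x, y) S ∈ J)
    (back : ∀ S ∈ J, ∀ y, ∃ x, insert (x, y) S ∈ J) {S₀ : Set (L × M)} (hS₀ : S₀ ∈ J) :
    ∃ f : L ≃o M, ∀ u ∈ S₀, f u.1 = u.2 := by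
  have hdom : ∀ x, IsCofinal {S : J | ∃ y, (x, y) ∈ S.1} := fun x S =>
    let ⟨y, hy⟩ := forth S S.2 x
    ⟨⟨_, hy⟩, ⟨y, mem_insert _ _⟩, subset_insert _ _⟩
  have hran : ∀ y, IsCofinal {S : J | ∃ x, (x, y) ∈ S.1} := fun y S =>
    let ⟨x, hx⟩ := back S S.2 y
    ⟨⟨_, hx⟩, ⟨x, mem_insert _ _⟩, subset_insert _ _⟩
  let D : L ⊕ M → Order.Cofinal J := Sum.elim (fun x => ⟨_, hdom x⟩) (fun y => ⟨_, hran y⟩)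
  let _ : Encodable (L ⊕ M) := Encodable.ofCountable _
  let I := Order.idealOfCofinals ⟨S₀, hS₀⟩ D
  obtain ⟨f, hf⟩ := exists_orderIso_of_rel (fun x y => ∃ S ∈ I, (x, y) ∈ S.1)
    (fun x =>
      let ⟨S, ⟨y, hy⟩, hS⟩ := Order.cofinal_meets_idealOfCofinals ⟨S₀, hS₀⟩ D (.inl x)
      ⟨y, S, hS, hy⟩)
    (fun y =>
      let ⟨S, ⟨x, hx⟩, hS⟩ := Order.cofinal_meets_idealOfCofinals ⟨S₀, hS₀⟩ D (.inr y)
      ⟨x, S, hS, hx⟩)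
    (fun ⟨S, hS, hu⟩ ⟨T, hT, hv⟩ =>
      let ⟨U, _, hSU, hTU⟩ := I.directed S hS T hT
      le_iff_le U U.2 _ (hSU hu) _ (hTU hv))
  exact ⟨f, fun u hu => hf _ _ ⟨⟨S₀, hS₀⟩, Order.mem_idealOfCofinals _ D, hu⟩⟩

theorem tupleIso_of_backAndForth [Countable L] [Countable M]
    (J : ∀ {k : ℕ}, (Fin k → L) → (Fin k → M) → Prop)
    (le_iff_le : ∀ {k} {a : Fin k → L} {b : Fin k → M}, J a b → ∀ i j, a i ≤ a j ↔ b i ≤ b j)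
    (forth : ∀ {k} {a : Fin k → L} {b : Fin k → M}, J a b →
      ∀ x, ∃ y, J (vecCons x a) (vecCons y b))
    (back : ∀ {k} {a : Fin k → L} {b : Fin k → M}, J a b →
      ∀ y, ∃ x, J (vecCons x a) (vecCons y b))
    {a : Fin k → L} {b : Fin k → M} (hab : J a b) : TupleIso a b := by
  let graph {k : ℕ} (a : Fin k → L) (b : Fin k → M) : Set (L × M) := range fun i => (a i, b i)
  have graph_vecCons : ∀ {k} (a : Fin k → L) (b : Fin k → M) (x : L) (y : M),
      insert (x, y) (graph a b) = graph (vecCons x a) (vecCons y b) := fun a b x y => by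
    ext ⟨x', y'⟩
    simp [graph, Fin.exists_fin_succ, eq_comm]
  obtain ⟨f, hf⟩ := exists_orderIso_of_backAndForth
    {S | ∃ (k : ℕ) (a : Fin k → L) (b : Fin k → M), J a b ∧ S = graph a b}
    (by
      rintro _ ⟨k, a, b, h, rfl⟩ _ ⟨i, rfl⟩ _ ⟨j, rfl⟩
      exact le_iff_le h i j)
    (by
      rintro _ ⟨k, a, b, h, rfl⟩ x
      exact (forth h x).imp fun y hy => ⟨_, _, _, hy, graph_vecCons a b x y⟩)
    (by
      rintro _ ⟨k, a, b, h, rfl⟩ y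
      exact (back h y).imp fun x hx => ⟨_, _, _, hx, graph_vecCons a b x y⟩)
    ⟨k, a, b, hab, rfl⟩
  exact ⟨f, fun i => hf _ ⟨i, rfl⟩⟩

theorem exists_bfT_stable (L M : Type) [LinearOrder L] [LinearOrder M] :
    ∃ θ : Ordinal.{u}, ∀ {k : ℕ} {a : Fin k → L} {b : Fin k → M},
      bfT θ L M a b → ∀ ξ : Ordinal.{u}, bfT ξ L M a b := by
  let firstFailure : (Σ k, (Fin k → L) × (Fin k → M)) → Ordinal.{u} :=
    fun p => sInf {ξ | ¬ bfT ξ L M p.2.1 p.2.2}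
  obtain ⟨θ, hθ⟩ := Ordinal.bddAbove_of_small (s := range firstFailure)
  refine ⟨θ, fun {k a b} h ξ => by_contra fun hξ => ?_⟩
  have hfail : ¬ bfT (firstFailure ⟨k, a, b⟩) L M a b :=
    csInf_mem (s := {ξ | ¬ bfT ξ L M a b}) ⟨ξ, hξ⟩
  exact hfail (h.mono (hθ ⟨_, rfl⟩))

theorem tupleIso_of_forall_bfT [Countable L] [Countable M] {a : Fin k → L} {b : Fin k → M}
    (h : ∀ ξ : Ordinal.{u}, bfT ξ L M a b) : TupleIso a b := by
  obtain ⟨θ, hθ⟩ := exists_bfT_stable.{u} L M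
  have hlt : θ < θ + 1 := lt_add_one θ
  have hlt' : θ + 1 < θ + 1 + 1 := lt_add_one _
  refine tupleIso_of_backAndForth (fun a b => ∀ ξ : Ordinal.{u}, bfT ξ L M a b)
    (fun h => (h 0).le_iff_le) (fun h x => ?_) (fun h y => ?_) h
  · exact (((h _).swap hlt').exists_vecCons hlt x).imp fun _ => hθ
  · exact ((h _).exists_vecCons hlt' y).imp fun _ hx => hθ (hx.swap hlt)

theorem rk_le {α : Ordinal.{u}} {a : Fin k → L}
    (h : ∀ b : Fin k → L, bfT α L L a b → TupleIso a b) : rk L a ≤ α :=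
  csInf_le' h

theorem tupleIso_of_bfT_rk [Countable L] {a b : Fin k → L} (h : bfT (rk.{u} L a) L L a b) :
    TupleIso a b := by
  obtain ⟨θ, hθ⟩ := exists_bfT_stable.{u} L L
  exact csInf_mem (s := {α : Ordinal.{u} | ∀ b, bfT α L L a b → TupleIso a b})
    ⟨θ, fun b hb => tupleIso_of_forall_bfT (hθ hb)⟩ b h

theorem rk_lt_scottRank (a : Fin k → L) : rk.{u} L a < scottRank L := by
  let rank : (Σ k, Fin k → L) → Ordinal.{u} := fun p => rk L p.2
  obtain ⟨θ, hθ⟩ := Ordinal.bddAbove_of_small (s := range rank)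
  exact csInf_mem (s := {α : Ordinal.{u} | ∀ (k : ℕ) (a : Fin k → L), rk L a < α})
    ⟨θ + 1, fun k a => Order.lt_add_one_iff.2 (hθ ⟨⟨k, a⟩, rfl⟩)⟩ k a

theorem scottRank_pos (L : Type) [LinearOrder L] : 0 < scottRank.{u} L :=
  (zero_le (a := rk L ![])).trans_lt (rk_lt_scottRank ![])

theorem scottRank_le {α : Ordinal.{u}} (h : ∀ (k : ℕ) (a : Fin k → L), rk L a < α) :
    scottRank L ≤ α :=
  csInf_le' h

theorem scottRank_le_add_one {α : Ordinal.{u}}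
    (h : ∀ {k : ℕ} {a b : Fin k → L}, bfT α L L a b → TupleIso a b) : scottRank L ≤ α + 1 :=
  scottRank_le fun _ _ => Order.lt_add_one_iff.2 (rk_le fun _ => h)

theorem scottRank_le_one_of_subsingleton [Subsingleton L] : scottRank.{u} L ≤ 1 :=
  scottRank_le fun _ a => (rk_le fun b _ => Subsingleton.elim a b ▸ .refl a).trans_lt zero_lt_one

theorem scottRank_le_of_orderIso [Countable M] (e : L ≃o M) : scottRank.{u} L ≤ scottRank M := by
  have iso : ∀ {k : ℕ} (a : Fin k → L), TupleIso a (e ∘ a) := fun a => ⟨e, fun _ => rfl⟩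
  refine scottRank_le fun k a => (rk_le fun b hb => ?_).trans_lt (rk_lt_scottRank (e ∘ a))
  have hMM : bfT (rk M (e ∘ a)) M M (e ∘ a) (e ∘ b) :=
    (bfT.of_tupleIso (iso a).symm).trans (hb.trans (bfT.of_tupleIso (iso b)))
  exact (iso a).trans ((tupleIso_of_bfT_rk hMM).trans (iso b).symm)

/-- The back-and-forth form of the `Π_{α+1}` Scott sentence of a structure of Scott rank `α`. -/
theorem tupleIso_of_bfT_scottRank_add_one [Countable L] [Countable M] {a : Fin k → L}
    {b : Fin k → M} (h : bfT (scottRank.{u} L + 1) L M a b) : TupleIso a b := by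
  have hlt : scottRank.{u} L < scottRank L + 1 := lt_add_one _
  have realize : ∀ {n : ℕ} (d : Fin n → M), ∃ c : Fin n → L, bfT (scottRank.{u} L) M L d c :=
    fun d => (h.exists_append hlt d).imp fun c hc => hc.of_pairs fun j => ⟨Fin.natAdd k j, by simp⟩
  refine tupleIso_of_backAndForth (fun c d => bfT (scottRank.{u} L) M L d c)
    (fun h i j => (h.le_iff_le i j).symm) (fun {n c d} h x => ?_) (fun {n c d} h y => ?_)
    (h.swap hlt)
  · have hr := rk_lt_scottRank.{u} (vecCons x c)
    obtain ⟨y, hy⟩ := h.exists_vecCons hr x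
    obtain ⟨e, he⟩ := realize (vecCons y d)
    exact ⟨y, he.trans (.of_tupleIso (tupleIso_of_bfT_rk (hy.trans (he.mono hr.le))).symm)⟩
  · have hr := rk_lt_scottRank.{u} c
    obtain ⟨e, he⟩ := realize (vecCons y d)
    obtain ⟨x, c', rfl⟩ : ∃ x c', e = vecCons x c' := ⟨_, _, (cons_head_tail e).symm⟩
    obtain ⟨f, hf⟩ := tupleIso_of_bfT_rk ((h.swap hr).trans (he.of_vecCons.mono hr.le))
    have hiso : TupleIso (vecCons (f.symm x) c) (vecCons x c') :=
      ⟨f, Fin.cases (f.apply_symm_apply x) hf⟩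
    exact ⟨f.symm x, he.trans (.of_tupleIso hiso.symm)⟩

theorem scottRank_le_of_ordConnected [Countable L] {P : Set L} (hP : P.OrdConnected) {x : L}
    (hx : x ∉ P) (hinv : ∀ f : L ≃o L, f x = x → f '' P = P) :
    scottRank.{u} P ≤ scottRank L := by
  let withParam {k : ℕ} (t : Fin k → P) : Fin (k + 1) → L := vecCons x fun i => t i
  refine scottRank_le fun k t => (rk_le fun s hs => ?_).trans_lt (rk_lt_scottRank (withParam t))
  have hL : bfT (rk L (withParam t)) L L (withParam t) (withParam s) :=
    hs.of_ordConnected hP <| Fin.cases (.inr ⟨rfl, hx⟩) fun i => .inl ⟨i, rfl, rfl⟩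
  obtain ⟨f, hf⟩ := tupleIso_of_bfT_rk hL
  refine ⟨((f.strictMono.strictMonoOn P).orderIso f P).trans (.setCongr _ _ (hinv f (hf 0))), ?_⟩
  exact fun i => Subtype.ext (hf i.succ)

theorem scottRank_Iio_le [Countable L] (x : L) : scottRank.{u} (Iio x) ≤ scottRank L :=
  scottRank_le_of_ordConnected ordConnected_Iio self_notMem_Iio fun f hf => by
    rw [f.image_Iio, hf]

theorem scottRank_Ioi_le [Countable L] (x : L) : scottRank.{u} (Ioi x) ≤ scottRank L :=
  scottRank_le_of_ordConnected ordConnected_Ioi self_notMem_Ioi fun f hf => by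
    rw [f.image_Ioi, hf]

/-- Over the parameters `a` and `b`, the sets `I` and `J` are cut out by the same
`≤_β`-invariant property. This is the back-and-forth substitute for being defined by the same
formula with parameters. -/
structure Separates (β : Ordinal.{u}) (a : Fin k → L) (b : Fin k → M) (I : Set L) (J : Set M) :
    Prop where
  mem_iff : ∀ x y, bfT β L M (vecCons x a) (vecCons y b) → (x ∈ I ↔ y ∈ J)
  mem_iff' : ∀ x y, bfT β M L (vecCons y b) (vecCons x a) → (x ∈ I ↔ y ∈ J)

namespace Separates

variable {β γ : Ordinal.{u}} {a : Fin k → L} {b : Fin k → M} {I : Set L} {J : Set M}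

theorem symm (h : Separates β a b I J) : Separates β b a J I :=
  ⟨fun y x hxy => (h.mem_iff' x y hxy).symm, fun y x hxy => (h.mem_iff x y hxy).symm⟩

theorem append (h : Separates β a b I J) (c : Fin l → L) (d : Fin l → M) :
    Separates β (Fin.append a c) (Fin.append b d) I J := by
  have pairs : ∀ x y (j : Fin (k + 1)), ∃ i,
      (vecCons x a : Fin (k + 1) → L) j = vecCons x (Fin.append a c) i ∧
      (vecCons y b : Fin (k + 1) → M) j = vecCons y (Fin.append b d) i := fun x y =>
    Fin.cases ⟨0, rfl, rfl⟩ fun j => ⟨(Fin.castAdd l j).succ, by simp⟩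
  exact ⟨fun x y hxy => h.mem_iff x y (hxy.of_pairs (pairs x y)),
    fun x y hxy => h.mem_iff' x y (hxy.of_pairs fun j => (pairs x y j).imp fun _ => And.symm)⟩

theorem mem_iff_of_bfT (h : Separates β a b I J) (hab : bfT β L M a b) (i : Fin k) :
    a i ∈ I ↔ b i ∈ J :=
  h.mem_iff _ _ <| hab.of_pairs <| Fin.cases ⟨i, rfl, rfl⟩ fun j => ⟨j, rfl, rfl⟩

theorem bfT_restrict {L M : Type} [LinearOrder L] [LinearOrder M] {k l : ℕ} {γ : Ordinal.{u}}
    {a : Fin k → L} {b : Fin k → M} {I : Set L} {J : Set M} {t : Fin l → I} {s : Fin l → J}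
    (hIJ : Separates β a b I J) (hab : bfT (β + γ) L M a b)
    (hts : ∀ j, ∃ i, (t j : L) = a i ∧ (s j : M) = b i) : bfT γ I J t s := by
  refine bfT_iff.2 ⟨(hab.of_pairs hts).le_iff_le, fun δ hδ n d => ?_⟩
  obtain ⟨c, hc⟩ := hab.exists_append (add_lt_add_right hδ β) fun j => (d j : M)
  have hcI : ∀ j, c j ∈ I := fun j => by
    simpa using (hIJ.append c fun j => (d j : M)).symm.mem_iff_of_bfT
      (hc.mono le_self_add) (Fin.natAdd k j)
  refine ⟨fun j => ⟨c j, hcI j⟩, (hIJ.append _ _).symm.bfT_restrict hc <|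
    Fin.addCases (fun j => ?_) (fun j => ⟨Fin.natAdd k j, by simp⟩)⟩
  obtain ⟨i, ht, hs⟩ := hts j
  exact ⟨Fin.castAdd n i, by simp [ht, hs]⟩
termination_by γ

theorem exists_orderIso (hIJ : Separates β a b I J) (hab : bfT γ L M a b)
    (hI : ∀ {n : ℕ} (t : Fin n → I), ∃ δ, β + δ ≤ γ ∧
      ∀ s : Fin n → J, bfT δ I J t s → TupleIso t s) :
    ∃ f : I ≃o J, ∀ i (x : I), (x : L) = a i → (f x : M) = b i := by
  obtain ⟨n, e, -, he⟩ := {i | a i ∈ I}.toFinite.fin_param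
  have ha : ∀ j, a (e j) ∈ I := fun j => he.subset (mem_range_self j)
  obtain ⟨δ, hδ, hiso⟩ := hI fun j => ⟨a (e j), ha j⟩
  have hb : ∀ j, b (e j) ∈ J := fun j =>
    (hIJ.mem_iff_of_bfT (hab.mono (le_self_add.trans hδ)) _).1 (ha j)
  obtain ⟨f, hf⟩ := hiso (fun j => ⟨b (e j), hb j⟩)
    (hIJ.bfT_restrict (hab.mono hδ) fun j => ⟨e j, rfl, rfl⟩)
  refine ⟨f, fun i x hx => ?_⟩
  obtain ⟨j, rfl⟩ : i ∈ range e := he.superset (show a i ∈ I from hx ▸ x.2)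
  rw [show x = ⟨a (e j), ha j⟩ from Subtype.ext hx, hf]

end Separates

section Fibers

variable {ι : Type*} [PartialOrder ι] {π : L → ι} {σ : M → ι}

theorem exists_orderIso_of_fibers (hπ : Monotone π) (hσ : Monotone σ)
    (f : ∀ i, π ⁻¹' {i} ≃o σ ⁻¹' {i}) : ∃ F : L ≃o M, ∀ x, F x = f (π x) ⟨x, rfl⟩ := by
  let F : L → M := fun x => f (π x) ⟨x, rfl⟩
  have F_eq : ∀ i (x : π ⁻¹' {i}), F x = f i x := by
    rintro _ ⟨x, rfl⟩
    rfl
  have σF : ∀ x, σ (F x) = π x := fun x => (f (π x) ⟨x, rfl⟩).2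
  have F_mono : StrictMono F := fun x x' hxx' => by
    rcases (hπ hxx'.le).lt_or_eq with h | h
    · exact hσ.reflect_lt (by rwa [σF, σF])
    · rw [F_eq (π x') ⟨x, h⟩, F_eq (π x') ⟨x', rfl⟩]
      exact (f (π x')).strictMono hxx'
  have F_surj : Function.Surjective F := fun y =>
    ⟨(f (σ y)).symm ⟨y, rfl⟩, by rw [F_eq, OrderIso.apply_symm_apply]⟩
  exact ⟨F_mono.orderIsoOfSurjective F F_surj, fun _ => rfl⟩

theorem tupleIso_of_fibers (hπ : Monotone π) (hσ : Monotone σ) {a : Fin k → L} {b : Fin k → M}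
    (h : ∀ i, ∃ f : π ⁻¹' {i} ≃o σ ⁻¹' {i}, ∀ j (x : π ⁻¹' {i}), (x : L) = a j → (f x : M) = b j) :
    TupleIso a b := by
  choose f hf using h
  obtain ⟨F, hF⟩ := exists_orderIso_of_fibers hπ hσ f
  exact ⟨F, fun j => by rw [hF, hf _ j _ rfl]⟩

theorem tupleIso_of_invariant_fibers [Countable L] (hπ : Monotone π) {α β γ : Ordinal.{u}}
    (hinv : ∀ x y, bfT β L L ![x] ![y] → π x = π y) (hα : ∀ i, scottRank (π ⁻¹' {i}) ≤ α)
    (hγ : ∀ δ < α, β + δ ≤ γ) {a b : Fin k → L} (h : bfT γ L L a b) : TupleIso a b := by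
  have hinv' : ∀ {x y}, bfT β L L (vecCons x a) (vecCons y b) → π x = π y := fun hxy =>
    hinv _ _ (hxy.of_pairs fun _ => ⟨0, by simp⟩)
  have hinv'' : ∀ {x y}, bfT β L L (vecCons y b) (vecCons x a) → π x = π y := fun hxy =>
    (hinv _ _ (hxy.of_pairs fun _ => ⟨0, by simp⟩)).symm
  have hsep : ∀ i, Separates β a b (π ⁻¹' {i}) (π ⁻¹' {i}) := fun i =>
    ⟨fun x y hxy => by simp [hinv' hxy], fun x y hxy => by simp [hinv'' hxy]⟩
  exact tupleIso_of_fibers hπ hπ fun i => (hsep i).exists_orderIso h fun t =>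
    ⟨rk _ t, hγ _ ((rk_lt_scottRank t).trans_le (hα i)), fun _ => tupleIso_of_bfT_rk⟩

end Fibers

section Cut

variable {α : Ordinal.{u}} {p : L} {q : M} {a : Fin k → L} {b : Fin k → M}

/-- The side of the cut point `p` on which `x` lies: `-1` for `x < p`, `0` for `x = p` and `1` for
`p < x`. -/
def cutSide (p x : L) : SignType :=
  if x < p then -1 else if p < x then 1 else 0

theorem monotone_cutSide (p : L) : Monotone (cutSide p) := fun x y hxy => by
  unfold cutSide
  split_ifs with hx hy _ hx' hy hy' hy hy'
  all_goals first | decide | order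

theorem cutSide_preimage_neg_one (p : L) : cutSide p ⁻¹' {-1} = Iio p := by
  ext x
  simp only [cutSide, mem_preimage, mem_singleton_iff, mem_Iio]
  split_ifs <;> simp_all

theorem cutSide_preimage_zero (p : L) : cutSide p ⁻¹' {0} = {p} := by
  ext x
  simp only [cutSide, mem_preimage, mem_singleton_iff]
  rcases lt_trichotomy x p with h | rfl | h
  · simp [h, h.ne]
  · simp
  · simp [h, h.not_gt, h.ne']

theorem cutSide_preimage_one (p : L) : cutSide p ⁻¹' {1} = Ioi p := by
  ext x
  simp only [cutSide, mem_preimage, mem_singleton_iff, mem_Ioi]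
  split_ifs <;> simp_all [le_of_lt]

theorem exists_orderIso_cutSide_fiber [Countable L] [Countable M]
    (h : bfT (α + 1) L M (vecCons p a) (vecCons q b)) {i : SignType}
    (hi : scottRank (cutSide p ⁻¹' {i}) ≤ α) :
    ∃ f : cutSide p ⁻¹' {i} ≃o cutSide q ⁻¹' {i}, ∀ j (x : cutSide p ⁻¹' {i}),
      (x : L) = vecCons p a j → (f x : M) = vecCons q b j := by
  have cutSide_eq : ∀ {x y}, (x ≤ p ↔ y ≤ q) → (p ≤ x ↔ q ≤ y) → cutSide p x = cutSide q y :=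
    fun hle hge => by simp only [cutSide, ← not_le, hle, hge]
  have hsep : Separates 0 (vecCons p a) (vecCons q b) (cutSide p ⁻¹' {i}) (cutSide q ⁻¹' {i}) := by
    constructor <;> intro x y hxy <;> rw [mem_preimage, mem_preimage, cutSide_eq]
    · exact hxy.le_iff_le 0 1
    · exact hxy.le_iff_le 1 0
    · exact (hxy.le_iff_le 0 1).symm
    · exact (hxy.le_iff_le 1 0).symm
  refine hsep.exists_orderIso h fun t => ⟨α + 1, (zero_add _).le, fun s hs => ?_⟩
  exact tupleIso_of_bfT_scottRank_add_one (hs.mono (by gcongr))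

theorem nonempty_Iio_orderIso_of_bfT [Countable L] [Countable M]
    (h : bfT (α + 1) L M (vecCons p a) (vecCons q b)) (hp : scottRank (Iio p) ≤ α) :
    Nonempty (Iio p ≃o Iio q) := by
  rw [← cutSide_preimage_neg_one] at hp
  rw [← cutSide_preimage_neg_one, ← cutSide_preimage_neg_one]
  exact ⟨(exists_orderIso_cutSide_fiber h hp).choose⟩

theorem tupleIso_of_cut [Countable L] [Countable M]
    (h : bfT (α + 1) L M (vecCons p a) (vecCons q b)) (hIio : scottRank (Iio p) ≤ α)
    (hIoi : scottRank (Ioi p) ≤ α) : TupleIso (vecCons p a) (vecCons q b) := by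
  refine tupleIso_of_fibers (monotone_cutSide p) (monotone_cutSide q) fun i =>
    exists_orderIso_cutSide_fiber h ?_
  rcases i.trichotomy with rfl | rfl | rfl
  · rwa [cutSide_preimage_neg_one]
  · rw [cutSide_preimage_zero]
    exact scottRank_le_one_of_subsingleton.trans
      (Order.one_le_iff_pos.2 ((scottRank_pos _).trans_le hIio))
  · rwa [cutSide_preimage_one]

theorem tupleIso_of_exists_cut [Countable L] {a b : Fin k → L} (h : bfT (α + 2) L L a b) (p : L)
    (hIio : scottRank (Iio p) ≤ α) (hIoi : scottRank (Ioi p) ≤ α) : TupleIso a b := by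
  have hlt : α + 1 < α + 2 := by gcongr; exact one_lt_two
  obtain ⟨q, hq⟩ := h.exists_vecCons hlt p
  exact (tupleIso_of_cut hq hIio hIoi).of_vecCons.symm

end Cut

theorem natCast_add_le_add_natCast (n : ℕ) (γ : Ordinal.{u}) : n + γ ≤ γ + n := by
  rcases lt_or_ge γ Ordinal.omega0 with h | h
  · obtain ⟨m, rfl⟩ := Ordinal.lt_omega0.1 h
    exact_mod_cast (add_comm n m).le
  · rw [Ordinal.natCast_add_of_omega0_le h]
    exact le_self_add

theorem add_two_add_le_mul_two_add_one {α δ : Ordinal.{u}} (h : δ < α) :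
    α + 2 + δ ≤ α * 2 + 1 := by
  have h2 : 2 + δ ≤ α + 1 := calc
    2 + δ ≤ δ + 2 := natCast_add_le_add_natCast 2 δ
    _ = δ + 1 + 1 := by rw [add_assoc, one_add_one_eq_two]
    _ ≤ α + 1 := by gcongr; exact Order.add_one_le_of_lt h
  calc
    α + 2 + δ = α + (2 + δ) := add_assoc ..
    _ ≤ α + (α + 1) := by gcongr
    _ = α * 2 + 1 := by rw [← one_add_one_eq_two, mul_add, mul_one, add_assoc]

section Sum

variable {A B : Type}

/-- The summand of `A ⊕ₗ B` containing a point: `false` for `A` and `true` for `B`, so that the map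
is monotone. -/
def summand (z : A ⊕ₗ B) : Bool :=
  (ofLex z).isRight

theorem range_inlₗ : range (Sum.inlₗ : A → A ⊕ₗ B) = summand ⁻¹' {false} := by
  refine Subset.antisymm (range_subset_iff.2 fun _ => rfl) ?_
  rintro (x | y) hz
  · exact ⟨x, rfl⟩
  · exact absurd hz Bool.false_ne_true.symm

theorem range_inrₗ : range (Sum.inrₗ : B → A ⊕ₗ B) = summand ⁻¹' {true} := by
  refine Subset.antisymm (range_subset_iff.2 fun _ => rfl) ?_
  rintro (x | y) hz
  · exact absurd hz Bool.false_ne_true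
  · exact ⟨y, rfl⟩

variable [LinearOrder A] [LinearOrder B]

theorem monotone_summand : Monotone (summand : A ⊕ₗ B → Bool) := by
  rintro (x | x) (y | y) hxy
  · exact le_rfl
  · exact Bool.false_le _
  · exact absurd hxy Sum.Lex.not_inr_le_inl
  · exact le_rfl

instance [Countable A] [Countable B] : Countable (A ⊕ₗ B) :=
  inferInstanceAs (Countable (A ⊕ B))

theorem scottRank_summand_fiber_le [Countable A] [Countable B] (i : Bool) :
    scottRank.{u} ((summand : A ⊕ₗ B → Bool) ⁻¹' {i}) ≤ max (scottRank A) (scottRank B) := by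
  cases i with
  | false =>
    rw [← range_inlₗ]
    exact le_max_of_le_left (scottRank_le_of_orderIso (Sum.Lex.inl_strictMono.orderIso _).symm)
  | true =>
    rw [← range_inrₗ]
    exact le_max_of_le_right (scottRank_le_of_orderIso (Sum.Lex.inr_strictMono.orderIso _).symm)

theorem scottRank_Iio_inl_le [Countable A] (x : A) :
    scottRank.{u} (Iio (Sum.inlₗ x : A ⊕ₗ B)) ≤ scottRank A := by
  have himage : (Sum.inlₗ '' Iio x : Set (A ⊕ₗ B)) = Iio (Sum.inlₗ x) := by
    refine Subset.antisymm (image_subset_iff.2 fun _ => Sum.Lex.inl_lt_inl_iff.2) ?_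
    rintro (z | z) hz
    · exact ⟨z, Sum.Lex.inl_lt_inl_iff.1 hz, rfl⟩
    · exact absurd hz Sum.Lex.not_inr_lt_inl
  rw [← himage]
  exact (scottRank_le_of_orderIso
    ((Sum.Lex.inl_strictMono.strictMonoOn (Iio x)).orderIso _ _).symm).trans (scottRank_Iio_le x)

theorem scottRank_Ioi_inr_le [Countable B] (y : B) :
    scottRank.{u} (Ioi (Sum.inrₗ y : A ⊕ₗ B)) ≤ scottRank B := by
  have himage : (Sum.inrₗ '' Ioi y : Set (A ⊕ₗ B)) = Ioi (Sum.inrₗ y) := by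
    refine Subset.antisymm (image_subset_iff.2 fun _ => Sum.Lex.inr_lt_inr_iff.2) ?_
    rintro (z | z) hz
    · exact absurd hz Sum.Lex.not_inr_lt_inl
    · exact ⟨z, Sum.Lex.inr_lt_inr_iff.1 hz, rfl⟩
  rw [← himage]
  exact (scottRank_le_of_orderIso
    ((Sum.Lex.inr_strictMono.strictMonoOn (Ioi y)).orderIso _ _).symm).trans (scottRank_Ioi_le y)

theorem tupleIso_sum_of_Iio_orderIso [Countable A] [Countable B] {α : Ordinal.{u}}
    (hA : scottRank A ≤ α) (hB : scottRank B ≤ α) {x : A} {y : B}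
    (e : Iio (Sum.inlₗ x : A ⊕ₗ B) ≃o Iio (Sum.inrₗ y : A ⊕ₗ B)) {a b : Fin k → A ⊕ₗ B}
    (h : bfT (α + 2) (A ⊕ₗ B) (A ⊕ₗ B) a b) : TupleIso a b :=
  tupleIso_of_exists_cut h (Sum.inrₗ y)
    ((scottRank_le_of_orderIso e.symm).trans ((scottRank_Iio_inl_le x).trans hA))
    ((scottRank_Ioi_inr_le y).trans hB)

theorem summand_eq_of_bfT [Countable A] [Countable B] {α : Ordinal.{u}} (hA : scottRank A ≤ α)
    (hIio : ∀ (x : A) (y : B),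
      IsEmpty (Iio (Sum.inlₗ x : A ⊕ₗ B) ≃o Iio (Sum.inrₗ y : A ⊕ₗ B)))
    {z w : A ⊕ₗ B} (h : bfT (α + 2) (A ⊕ₗ B) (A ⊕ₗ B) ![z] ![w]) : summand z = summand w := by
  have hlt : α + 1 < α + 2 := by gcongr; exact one_lt_two
  have not_bfT : ∀ (x : A) (y : B), ¬ bfT (α + 1) (A ⊕ₗ B) (A ⊕ₗ B) ![.inlₗ x] ![.inrₗ y] :=
    fun x y hxy => not_isEmpty_iff.2
      (nonempty_Iio_orderIso_of_bfT hxy ((scottRank_Iio_inl_le x).trans hA)) (hIio x y)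
  rcases z with x | y <;> rcases w with x' | y'
  · rfl
  · exact absurd (h.mono hlt.le) (not_bfT x y')
  · exact absurd (h.swap hlt) (not_bfT x' y)
  · rfl

end Sum

theorem scottRank_sum_general (A B : Type) [LinearOrder A] [LinearOrder B]
    [Countable A] [Countable B] :
    scottRank.{u} (A ⊕ₗ B) ≤ max (scottRank A) (scottRank B) * 2 + 2 := by
  set α : Ordinal.{u} := max (scottRank A) (scottRank B)
  have hα_pos : 0 < α := (scottRank_pos A).trans_le (le_max_left _ _)
  have two_eq : α * 2 + 2 = α * 2 + 1 + 1 := by rw [add_assoc, one_add_one_eq_two]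
  refine two_eq ▸ scottRank_le_add_one fun h => ?_
  by_cases hcut : ∃ (x : A) (y : B),
      Nonempty (Iio (Sum.inlₗ x : A ⊕ₗ B) ≃o Iio (Sum.inrₗ y : A ⊕ₗ B))
  · obtain ⟨x, y, ⟨e⟩⟩ := hcut
    have hle : α + 2 ≤ α * 2 + 1 := by simpa using add_two_add_le_mul_two_add_one hα_pos
    exact tupleIso_sum_of_Iio_orderIso (le_max_left _ _) (le_max_right _ _) e (h.mono hle)
  · simp only [not_exists, not_nonempty_iff] at hcut
    exact tupleIso_of_invariant_fibers monotone_summand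
      (fun _ _ => summand_eq_of_bfT (le_max_left _ _) hcut) scottRank_summand_fiber_le
      (fun _ => add_two_add_le_mul_two_add_one) h

/-- For countable linear orders `A`, `B`: `SR (A + B) ≤ max (SR A) (SR B) · 2 + 3`. -/
theorem scottRank_sum (A B : Type) [LinearOrder A] [LinearOrder B]
    [Countable A] [Countable B] :
    scottRank (A ⊕ₗ B) ≤ max (scottRank A) (scottRank B) * 2 + 3 :=
  (scottRank_sum_general A B).trans (by gcongr; norm_num)
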